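/- For every α : ℕ → {0,1,2}, every n ∈ ℕ, and every x ∈ [0,1] ⊆ ℝ: if |x − Φ(ρ(α))| < 2^(−(n+5)), then there exists γ : ℕ → {0,1,2} whose initial segment of length n equals that of ρ(α) and such that x = Φ(γ). -/

import Mathlib

open Filter

/-- `triN s` : numbering of the nodes of the ternary tree:
`N(⟨⟩) = 1`, `N(s * ⟨i⟩) = 2 * N(s) + i - 1`. -/
def triN (s : List (Fin 3)) : ℕ := s.foldl (fun a i => 2 * a + i.val - 1) 1

/-- Initial segment of length `n` of `α`. -/
def seg3 (α : ℕ → Fin 3) (n : ℕ) : List (Fin 3) := List.ofFn fun i : Fin n => α i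

/-- `Phi α` is the limit of the Cauchy sequence `x_α^n = 2^(-(n+1)) * N(ᾱ n)`. -/
noncomputable def Phi (α : ℕ → Fin 3) : ℝ :=
  limUnder atTop fun n => (triN (seg3 α n) : ℝ) / 2 ^ (n + 1)

/-- `rho3` is the identity on triples over `{0,1,2}` except on four patterns. -/
def rho3 : Fin 3 × Fin 3 × Fin 3 → Fin 3 × Fin 3 × Fin 3 := fun t =>
  if t = (1, 2, 2) then (2, 0, 2)
  else if t = (1, 0, 0) then (0, 2, 0)
  else if t = (0, 2, 2) then (1, 0, 2)
  else if t = (2, 0, 0) then (1, 2, 0)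
  else t

/-- The auxiliary triples `σ^n_α`. -/
def sigAux (α : ℕ → Fin 3) : ℕ → Fin 3 × Fin 3 × Fin 3
  | 0 => rho3 (α 0, α 1, α 2)
  | n + 1 => rho3 ((sigAux α n).2.1, α (n + 2), α (n + 3))

/-- The map `ρ : {0,1,2}^ℕ → {0,1,2}^ℕ`, `ρ(α)(n) = (σ^n_α)₀`. -/
def rho (α : ℕ → Fin 3) (n : ℕ) : Fin 3 := (sigAux α n).1

/-!
Subtracting `1` from the node numbers turns the recursion into `N - 1 ↦ 2 * (N - 1) + i`, so
`Φ(α) = ∑ αᵢ / 2 ^ (i + 2)`: a binary expansion with digits `0, 1, 2`. The sequences extending a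
given segment of length `n` therefore represent exactly an interval of length `2⁻ⁿ`, whose left
endpoint is the partial sum of that segment.

The map `ρ` is a transducer: it emits one digit and continues on a rewritten sequence `carry α`.
Since `ρ₃` preserves `2a + b`, this leaves the represented real unchanged, so the position of
`Φ(ρ(α))` in the interval of its initial segment of length `n` is `Φ(carryⁿ α)`. If that position is
within `1/8` of an end of the unit interval, then `carryⁿ α` starts with `0, 0` or with `2, 2`, and
reading `ρ₃` backwards shows that all digits emitted so far were `0`, respectively `2`. In that case
the end of the interval in question is an end of `[0, 1]` itself.
-/

open Finset

section PhiAsSeries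

variable (α : ℕ → Fin 3)

/-- The partial sum `∑_{i < n} αᵢ / 2 ^ (i + 2)` of the series for `Phi α`; it is the left endpoint
of the interval of reals represented by the sequences that agree with `α` below `n`. -/
noncomputable def partialPhi (n : ℕ) : ℝ := ∑ i ∈ range n, ((α i : ℕ) : ℝ) / 2 ^ (i + 2)

lemma partialPhi_succ (n : ℕ) :
    partialPhi α (n + 1) = partialPhi α n + ((α n : ℕ) : ℝ) / 2 ^ (n + 2) :=
  sum_range_succ _ n

lemma partialPhi_congr {α β : ℕ → Fin 3} {n : ℕ} (h : ∀ i < n, α i = β i) :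
    partialPhi α n = partialPhi β n :=
  sum_congr rfl fun i hi => by rw [h i (mem_range.1 hi)]

lemma partialPhi_of_forall_eq {α : ℕ → Fin 3} {d : Fin 3} {n : ℕ} (h : ∀ i < n, α i = d) :
    partialPhi α n = ((d : ℕ) : ℝ) / 2 * (1 - 1 / 2 ^ n) := by
  induction n with
  | zero => simp [partialPhi]
  | succ n ih =>
    rw [partialPhi_succ, ih fun i hi => h i (by omega), h n n.lt_succ_self]
    field_simp
    ring

lemma seg3_succ (n : ℕ) : seg3 α (n + 1) = seg3 α n ++ [α n] := by
  simp only [seg3, List.ofFn_succ_last, Fin.val_castSucc, Fin.val_last]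

lemma triN_append_singleton (s : List (Fin 3)) (i : Fin 3) :
    triN (s ++ [i]) = 2 * triN s + i - 1 := by
  simp [triN]

lemma triN_seg3_eq (n : ℕ) : (triN (seg3 α n) : ℝ) = 2 ^ (n + 1) * partialPhi α n + 1 := by
  suffices h : 1 ≤ triN (seg3 α n) ∧
      (triN (seg3 α n) : ℝ) = 2 ^ (n + 1) * partialPhi α n + 1 from h.2
  induction n with
  | zero => simp [seg3, triN, partialPhi]
  | succ n ih =>
    obtain ⟨one_le, ih⟩ := ih
    rw [seg3_succ, triN_append_singleton, partialPhi_succ]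
    refine ⟨by omega, ?_⟩
    rw [Nat.cast_sub (by omega)]
    push_cast
    rw [ih]
    field_simp
    ring

lemma digit_div_le_geometric (i : ℕ) : ((α i : ℕ) : ℝ) / 2 ^ (i + 2) ≤ 1 / 2 / 2 ^ i := by
  have digit_le : ((α i : ℕ) : ℝ) ≤ 2 := by exact_mod_cast Fin.is_le (α i)
  calc ((α i : ℕ) : ℝ) / 2 ^ (i + 2) ≤ 2 / 2 ^ (i + 2) := by gcongr
    _ = 1 / 2 / 2 ^ i := by ring

lemma summable_digit_div : Summable fun i => ((α i : ℕ) : ℝ) / 2 ^ (i + 2) :=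
  (summable_geometric_two' 1).of_nonneg_of_le (fun i => by positivity) (digit_div_le_geometric α)

lemma hasSum_Phi : HasSum (fun i => ((α i : ℕ) : ℝ) / 2 ^ (i + 2)) (Phi α) := by
  have approx_eq (n : ℕ) : partialPhi α n + (1 / 2) ^ (n + 1) =
      (triN (seg3 α n) : ℝ) / 2 ^ (n + 1) := by
    rw [triN_seg3_eq, one_div_pow]
    field_simp
  have geom_tendsto : Tendsto (fun n => (1 / 2 : ℝ) ^ (n + 1)) atTop (nhds 0) :=
    (tendsto_pow_atTop_nhds_zero_of_lt_one (by norm_num) (by norm_num)).comp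
      (tendsto_add_atTop_nat 1)
  have approx_tendsto := (summable_digit_div α).hasSum.tendsto_sum_nat.add geom_tendsto
  rw [add_zero] at approx_tendsto
  rw [Phi, (approx_tendsto.congr approx_eq).limUnder_eq]
  exact (summable_digit_div α).hasSum

lemma tendsto_partialPhi : Tendsto (partialPhi α) atTop (nhds (Phi α)) :=
  (hasSum_Phi α).tendsto_sum_nat

lemma Phi_nonneg : 0 ≤ Phi α := (hasSum_Phi α).nonneg fun i => by positivity

lemma Phi_le_one : Phi α ≤ 1 :=
  hasSum_le (digit_div_le_geometric α) (hasSum_Phi α) (hasSum_geometric_two' 1)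

lemma Phi_eq_partialPhi_add (n : ℕ) :
    Phi α = partialPhi α n + Phi (fun i => α (i + n)) / 2 ^ n := by
  rw [← (hasSum_Phi α).tsum_eq, ← (summable_digit_div α).sum_add_tsum_nat_add n,
    ← (hasSum_Phi fun i => α (i + n)).tsum_eq, ← tsum_div_const]
  refine congrArg (partialPhi α n + ·) (tsum_congr fun i => ?_)
  ring

lemma Phi_eq_head_add_tail :
    Phi α = ((α 0 : ℕ) : ℝ) / 4 + Phi (fun i => α (i + 1)) / 2 := by
  rw [Phi_eq_partialPhi_add α 1, partialPhi, sum_range_one]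
  norm_num

lemma Phi_eq_first_two_add_tail :
    Phi α = (2 * ((α 0 : ℕ) : ℝ) + ((α 1 : ℕ) : ℝ)) / 8 + Phi (fun i => α (i + 2)) / 4 := by
  rw [Phi_eq_head_add_tail α, Phi_eq_head_add_tail fun i => α (i + 1)]
  ring

end PhiAsSeries

lemma exists_Phi_eq {y : ℝ} (hy : y ∈ Set.Icc (0 : ℝ) 1) : ∃ γ : ℕ → Fin 3, Phi γ = y := by
  obtain ⟨b, -, rfl⟩ := Real.ofDigits_SurjOn one_lt_two hy
  let doubled (i : ℕ) : Fin 3 := if b i = 0 then 0 else 2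
  have doubled_val (i : ℕ) : ((doubled i : ℕ) : ℝ) = 2 * ((b i : ℕ) : ℝ) := by
    rcases Fin.exists_fin_two.1 ⟨b i, rfl⟩ with h | h <;> simp [doubled, h]
  refine ⟨doubled, (hasSum_Phi doubled).tsum_eq.symm.trans (tsum_congr fun i => ?_)⟩
  rw [doubled_val, Real.ofDigitsTerm]
  push_cast
  ring

lemma exists_Phi_eq_of_mem_Icc_partialPhi (β : ℕ → Fin 3) {n : ℕ} {x : ℝ}
    (hx : x ∈ Set.Icc (partialPhi β n) (partialPhi β n + 1 / 2 ^ n)) :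
    ∃ γ : ℕ → Fin 3, (∀ i < n, γ i = β i) ∧ x = Phi γ := by
  obtain ⟨δ, hδ⟩ : ∃ δ, Phi δ = (x - partialPhi β n) * 2 ^ n := by
    refine exists_Phi_eq ⟨mul_nonneg (sub_nonneg.2 hx.1) (by positivity), ?_⟩
    rw [← le_div_iff₀ (by positivity)]
    linarith [hx.2]
  let γ (i : ℕ) : Fin 3 := if i < n then β i else δ (i - n)
  have γ_eq_β : ∀ i < n, γ i = β i := fun i hi => if_pos hi
  have γ_tail : (fun i => γ (i + n)) = δ := by
    funext i
    simp [γ]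
  refine ⟨γ, γ_eq_β, ?_⟩
  rw [Phi_eq_partialPhi_add γ n, partialPhi_congr γ_eq_β, γ_tail, hδ]
  field_simp
  ring

section LeadingDigits

variable {α : ℕ → Fin 3}

lemma first_two_eq_zero_of_Phi_lt (h : Phi α < 1 / 8) : α 0 = 0 ∧ α 1 = 0 := by
  have weight_lt : 2 * ((α 0 : ℕ) : ℝ) + ((α 1 : ℕ) : ℝ) < 1 := by
    linarith [Phi_eq_first_two_add_tail α, Phi_nonneg fun i => α (i + 2)]
  norm_cast at weight_lt
  omega

lemma first_two_eq_two_of_lt_Phi (h : 7 / 8 < Phi α) : α 0 = 2 ∧ α 1 = 2 := by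
  have lt_weight : 5 < 2 * ((α 0 : ℕ) : ℝ) + ((α 1 : ℕ) : ℝ) := by
    linarith [Phi_eq_first_two_add_tail α, Phi_le_one fun i => α (i + 2)]
  norm_cast at lt_weight
  omega

end LeadingDigits

section Transducer

/-- The sequence on which `rho` continues after emitting its first digit: the second entry of the
rewritten triple `σ⁰` followed by the digits `α₂, α₃, …`. -/
def carry (α : ℕ → Fin 3) : ℕ → Fin 3
  | 0 => (sigAux α 0).2.1
  | i + 1 => α (i + 2)

variable (α : ℕ → Fin 3)

lemma sigAux_carry (n : ℕ) : sigAux (carry α) n = sigAux α (n + 1) := by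
  induction n with
  | zero => rfl
  | succ n ih =>
    rw [sigAux, ih]
    rfl

lemma rho_carry (n : ℕ) : rho (carry α) n = rho α (n + 1) :=
  congrArg Prod.fst (sigAux_carry α n)

lemma rho_carry_iterate (n i : ℕ) : rho (carry^[n] α) i = rho α (i + n) := by
  induction n generalizing i with
  | zero => rfl
  | succ n ih => rw [Function.iterate_succ_apply', rho_carry, ih, add_right_comm, add_assoc]

lemma two_mul_fst_add_snd_rho3 : ∀ t : Fin 3 × Fin 3 × Fin 3,
    2 * ((rho3 t).1 : ℕ) + (rho3 t).2.1 = 2 * t.1 + t.2.1 := by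
  decide

lemma Phi_eq_rho_zero_add_carry : Phi α = ((rho α 0 : ℕ) : ℝ) / 4 + Phi (carry α) / 2 := by
  have weight_eq : 2 * ((rho α 0 : ℕ) : ℝ) + ((carry α 0 : ℕ) : ℝ) =
      2 * ((α 0 : ℕ) : ℝ) + ((α 1 : ℕ) : ℝ) := by
    exact_mod_cast two_mul_fst_add_snd_rho3 (α 0, α 1, α 2)
  rw [Phi_eq_first_two_add_tail, ← weight_eq, Phi_eq_head_add_tail (carry α)]
  simp only [carry]
  ring

lemma Phi_eq_partialPhi_rho_add (n : ℕ) :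
    Phi α = partialPhi (rho α) n + Phi (carry^[n] α) / 2 ^ n := by
  induction n with
  | zero => simp [partialPhi]
  | succ n ih =>
    rw [ih, Phi_eq_rho_zero_add_carry (carry^[n] α), rho_carry_iterate, zero_add,
      ← Function.iterate_succ_apply' carry, partialPhi_succ]
    ring

theorem Phi_rho : Phi (rho α) = Phi α := by
  refine tendsto_nhds_unique (tendsto_partialPhi (rho α)) ?_
  have partialPhi_eq (n : ℕ) : Phi α - Phi (carry^[n] α) / 2 ^ n = partialPhi (rho α) n :=
    sub_eq_of_eq_add (Phi_eq_partialPhi_rho_add α n)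
  have tail_tendsto : Tendsto (fun n => Phi (carry^[n] α) / 2 ^ n) atTop (nhds 0) := by
    refine squeeze_zero (fun n => div_nonneg (Phi_nonneg _) (by positivity)) (fun n => ?_)
      (tendsto_pow_atTop_nhds_zero_of_lt_one (r := (1 / 2 : ℝ)) (by norm_num) (by norm_num))
    rw [one_div_pow]
    gcongr
    exact Phi_le_one _
  simpa only [sub_zero] using (tail_tendsto.const_sub (Phi α)).congr partialPhi_eq

lemma Phi_rho_eq_partialPhi_add (n : ℕ) :
    Phi (rho α) = partialPhi (rho α) n + Phi (carry^[n] α) / 2 ^ n := by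
  rw [Phi_rho, ← Phi_eq_partialPhi_rho_add]

lemma rho3_eq_of_snd_eq : ∀ d : Fin 3, d ≠ 1 → ∀ a b : Fin 3, (rho3 (a, b, d)).2.1 = d →
    a = d ∧ b = d ∧ (rho3 (a, b, d)).1 = d := by
  decide

lemma rho_eq_of_carry_iterate_eq {d : Fin 3} (hd : d ≠ 1) {n : ℕ}
    (h : carry^[n] α 0 = d ∧ carry^[n] α 1 = d) : ∀ i < n, rho α i = d := by
  induction n with
  | zero => simp
  | succ n ih =>
    rw [Function.iterate_succ_apply'] at h
    obtain ⟨snd_eq, third_eq⟩ : (rho3 (carry^[n] α 0, carry^[n] α 1, carry^[n] α 2)).2.1 = d ∧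
      carry^[n] α 2 = d := h
    rw [third_eq] at snd_eq
    obtain ⟨zero_eq, one_eq, emitted_eq⟩ := rho3_eq_of_snd_eq d hd _ _ snd_eq
    have rho_n_eq : rho α n = d := by
      rw [← zero_add n, ← rho_carry_iterate, rho, sigAux, third_eq, emitted_eq]
    intro i hi
    rcases Nat.lt_succ_iff_lt_or_eq.1 hi with hlt | rfl
    · exact ih ⟨zero_eq, one_eq⟩ i hlt
    · exact rho_n_eq

lemma partialPhi_rho_eq_zero {n : ℕ} (h : Phi (carry^[n] α) < 1 / 8) :
    partialPhi (rho α) n = 0 := by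
  rw [partialPhi_of_forall_eq
    (rho_eq_of_carry_iterate_eq α zero_ne_one (first_two_eq_zero_of_Phi_lt h))]
  simp

lemma partialPhi_rho_add_eq_one {n : ℕ} (h : 7 / 8 < Phi (carry^[n] α)) :
    partialPhi (rho α) n + 1 / 2 ^ n = 1 := by
  rw [partialPhi_of_forall_eq
    (rho_eq_of_carry_iterate_eq α (by decide) (first_two_eq_two_of_lt_Phi h))]
  norm_num

end Transducer

theorem stmt8_general (α : ℕ → Fin 3) (n : ℕ) (x : ℝ) (hx : x ∈ Set.Icc (0 : ℝ) 1)
    (h : |x - Phi (rho α)| ≤ 1 / 2 ^ (n + 3)) :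
    ∃ γ : ℕ → Fin 3, (∀ i < n, γ i = rho α i) ∧ x = Phi γ := by
  have radius_eq : (1 : ℝ) / 2 ^ (n + 3) = 1 / 8 / 2 ^ n := by ring
  rw [Phi_rho_eq_partialPhi_add α n, radius_eq, abs_le] at h
  apply exists_Phi_eq_of_mem_Icc_partialPhi
  constructor
  · rcases lt_or_ge (Phi (carry^[n] α)) (1 / 8) with near_zero | away
    · exact (partialPhi_rho_eq_zero α near_zero).trans_le hx.1
    · have : 1 / 8 / 2 ^ n ≤ Phi (carry^[n] α) / 2 ^ n := by gcongr
      linarith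
  · rcases lt_or_ge (7 / 8) (Phi (carry^[n] α)) with near_one | away
    · exact hx.2.trans_eq (partialPhi_rho_add_eq_one α near_one).symm
    · have : Phi (carry^[n] α) / 2 ^ n ≤ (1 - 1 / 8) / 2 ^ n := by
        gcongr
        linarith
      linarith [sub_div (1 : ℝ) (1 / 8) (2 ^ n)]

theorem stmt8 (α : ℕ → Fin 3) (n : ℕ) (x : ℝ) (hx : x ∈ Set.Icc (0 : ℝ) 1)
    (h : |x - Phi (rho α)| < 1 / 2 ^ (n + 5)) :
    ∃ γ : ℕ → Fin 3, (∀ i < n, γ i = rho α i) ∧ x = Phi γ := by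
  refine stmt8_general α n x hx (h.le.trans ?_)
  gcongr <;> norm_num
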